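/- In the monoid Q associated to the game 4.7, for every heap size k and every m ∈ ℕ with w(H_k) ≤ m, one has b^m · Φ(H_k) = a^{g(H_k)} · b^{m + t(H_k)}, where g(H_k) = 2 if k is even and g(H_k) = 1 if k is odd. -/

import Mathlib

/-! The identity is read off the presentation. Heaps of size `1` to `4` and `6` use only `a² = 1`;
heap `5` is the relation `bc = ab³` multiplied by a power of `b`; heap `n + 7` is the relation
`b^(n+1) d_n = a^(n+1) b^(2n+5)` multiplied by a power of `b`, where `a^(n+1)` depends only on the
parity of `n + 1`, which is the parity of `n + 7`. -/

/-- Generators of the misère quotient of 4.7: `a`, `b`, `c`, and `d n`. -/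
inductive Gen47 where
  | a : Gen47
  | b : Gen47
  | c : Gen47
  | d : ℕ → Gen47

/-- The free commutative monoid on the generators, written multiplicatively. -/
abbrev FM47 := Multiplicative (Multiset Gen47)

/-- The generator `x` as an element of the free commutative monoid. -/
def fgen47 (x : Gen47) : FM47 := Multiplicative.ofAdd {x}

def fa : FM47 := fgen47 .a
def fb : FM47 := fgen47 .b
def fc : FM47 := fgen47 .c
def fd (n : ℕ) : FM47 := fgen47 (.d n)

/-- The defining relations of the quotient `Q` for 4.7:
`a² = 1`, `bc = ab³`, `c² = b⁴`, `b^(n+1) d_n = a^(n+1) b^(2n+5)`,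
`c d_n = a b² d_n`, and `d_m d_n = a^(m+1) b^(m+4) d_n` for `m ≤ n`. -/
def rel47 : FM47 → FM47 → Prop := fun x y =>
  (x = fa ^ 2 ∧ y = 1) ∨
  (x = fb * fc ∧ y = fa * fb ^ 3) ∨
  (x = fc ^ 2 ∧ y = fb ^ 4) ∨
  (∃ n : ℕ, x = fb ^ (n + 1) * fd n ∧ y = fa ^ (n + 1) * fb ^ (2 * n + 5)) ∨
  (∃ n : ℕ, x = fc * fd n ∧ y = fa * fb ^ 2 * fd n) ∨
  (∃ m n : ℕ, m ≤ n ∧ x = fd m * fd n ∧ y = fa ^ (m + 1) * fb ^ (m + 4) * fd n)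

/-- The commutative monoid `Q` presented by generators `a`, `b`, `c`, `d_n`
and the relations `rel47`. -/
def Q47 : Type := (conGen rel47).Quotient

instance : CommMonoid Q47 := Con.commMonoid _

/-- The image of `a` in `Q`. -/
def qa : Q47 := (conGen rel47).mk' fa
/-- The image of `b` in `Q`. -/
def qb : Q47 := (conGen rel47).mk' fb
/-- The image of `c` in `Q`. -/
def qc : Q47 := (conGen rel47).mk' fc
/-- The image of `d_n` in `Q`. -/
def qd (n : ℕ) : Q47 := (conGen rel47).mk' (fd n)

/-- The P-portion `P = {a} ∪ {b^(2m) : m ≥ 1} ∪ {b^m d_n : m odd, n even, m < n}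
∪ {a b^m d_n : m even, n odd, m < n}`. -/
def P47 : Set Q47 :=
  {x | x = qa} ∪
  {x | ∃ m : ℕ, 1 ≤ m ∧ x = qb ^ (2 * m)} ∪
  {x | ∃ m n : ℕ, m % 2 = 1 ∧ n % 2 = 0 ∧ m < n ∧ x = qb ^ m * qd n} ∪
  {x | ∃ m n : ℕ, m % 2 = 0 ∧ n % 2 = 1 ∧ m < n ∧ x = qa * qb ^ m * qd n}

/-- The pretending function on single heaps for 4.7. -/
def phi47 (k : ℕ) : Q47 :=
  if k = 1 ∨ k = 3 then qa
  else if k = 2 ∨ k = 4 then qb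
  else if k = 5 then qc
  else if k = 6 then qb ^ 3
  else qd (k - 7)

/-- The pretending function extended multiplicatively to positions. -/
def Phi47 (G : Multiset ℕ) : Q47 := (G.map phi47).prod

/-- The function `t` on single heaps for 4.7. -/
def t47 (k : ℕ) : ℕ :=
  if k = 1 then 0 else if k = 2 then 1 else k - 3

/-- The function `w` on single heaps for 4.7. -/
def w47 (k : ℕ) : ℕ :=
  if k ≤ 4 then 0 else if k = 5 then 1 else k - 6

lemma qa_sq : qa ^ 2 = 1 :=
  (Con.eq _).2 (ConGen.Rel.of _ _ (Or.inl ⟨rfl, rfl⟩))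

lemma qb_mul_qc : qb * qc = qa * qb ^ 3 :=
  (Con.eq _).2 (ConGen.Rel.of _ _ (Or.inr (Or.inl ⟨rfl, rfl⟩)))

lemma qb_pow_mul_qd (n : ℕ) : qb ^ (n + 1) * qd n = qa ^ (n + 1) * qb ^ (2 * n + 5) :=
  (Con.eq _).2 (ConGen.Rel.of _ _ (Or.inr (Or.inr (Or.inr (Or.inl ⟨n, rfl, rfl⟩)))))

lemma qa_pow_eq (k : ℕ) : qa ^ k = qa ^ (if k % 2 = 0 then 2 else 1) := by
  conv_lhs => rw [← Nat.div_add_mod k 2, pow_add, pow_mul, qa_sq, one_pow, one_mul]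
  rcases Nat.mod_two_eq_zero_or_one k with h | h <;> simp [h, qa_sq]

/-- For every heap size `k ≥ 1` and every `m ∈ ℕ` with `w(H_k) ≤ m`, one has
`b^m Φ(H_k) = a^(g(H_k)) b^(m + t(H_k))`, where `g(H_k)` is 2 if `k` is even
and 1 if `k` is odd. -/
theorem phi47_absorb :
    ∀ k : ℕ, 1 ≤ k → ∀ m : ℕ, w47 k ≤ m →
      qb ^ m * phi47 k =
        qa ^ (if k % 2 = 0 then 2 else 1) * qb ^ (m + t47 k) := by
  intro k hk m hm
  by_cases h7 : 7 ≤ k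
  · obtain ⟨n, rfl⟩ := Nat.exists_eq_add_of_le' h7
    have hw : n + 1 ≤ m := by
      unfold w47 at hm
      split_ifs at hm <;> omega
    obtain ⟨j, rfl⟩ := Nat.exists_eq_add_of_le' hw
    have ht : t47 (n + 7) = n + 4 := by
      unfold t47
      split_ifs <;> omega
    have hphi : phi47 (n + 7) = qd n := by simp [phi47]
    have hpar : (n + 7) % 2 = (n + 1) % 2 := by omega
    rw [ht, hphi, hpar, ← qa_pow_eq, pow_add, mul_assoc, qb_pow_mul_qd, mul_left_comm, ← pow_add]
    congr 2
    omega
  · have hk' : k < 7 := by omega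
    interval_cases k
    · simp [phi47, t47, mul_comm]
    · simp [phi47, t47, qa_sq, pow_add]
    · simp [phi47, t47, mul_comm]
    · simp [phi47, t47, qa_sq, pow_add]
    · have hw : 1 ≤ m := by simpa [w47] using hm
      obtain ⟨j, rfl⟩ := Nat.exists_eq_add_of_le' hw
      simp only [phi47, t47]
      norm_num
      rw [pow_succ, mul_assoc, qb_mul_qc, mul_left_comm, ← pow_add]
    · simp [phi47, t47, qa_sq, pow_add]
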